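/- A finite poset P is sub-representable if and only if P is a flower, a co-flower, or a disjoint union of chains. -/

import Mathlib

def SubRepresentable (α : Type*) [PartialOrder α] : Prop :=
  ∃ g : Set α → Set α,
    (∀ P₁ P₂ : Set α, Nonempty (↥P₁ ↪o ↥P₂) ↔ g P₁ ⊆ g P₂) ∧
    ∀ P₁ : Set α, Nonempty (↥P₁ ↪o ↥(g P₁)) ∧ Nonempty (↥(g P₁) ↪o ↥P₁)
def IsFlower (α : Type*) [PartialOrder α] : Prop :=
  ∃ x : α, IsChain (· ≤ ·) {y : α | y < x} ∧
    IsAntichain (· ≤ ·) {y : α | x < y} ∧ ({y : α | x < y}).Nontrivial ∧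
    ∀ y : α, y < x ∨ y = x ∨ x < y

def IsDisjointUnionOfChains (α : Type*) [PartialOrder α] : Prop :=
  ∀ a b c : α, (a ≤ c ∨ c ≤ a) → (b ≤ c ∨ c ≤ b) → (a ≤ b ∨ b ≤ a)

/-- embedding from inclusion -/
def Set.embeddingOfSubsetOrder {α : Type*} [PartialOrder α] {S T : Set α} (h : S ⊆ T) : ↥S ↪o ↥T :=
  ⟨⟨fun x => ⟨x.1, h x.2⟩, fun _ _ hxy => Subtype.ext (congrArg (fun z => z.1) hxy)⟩, Iff.rfl⟩

theorem SubRep_dual {α : Type*} [PartialOrder α] (h : SubRepresentable α) :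
    SubRepresentable αᵒᵈ := by
  obtain ⟨g, h1, h2⟩ := h
  have key : ∀ S T : Set α, Nonempty (↥S ↪o ↥T) ↔
      Nonempty (↥(OrderDual.ofDual ⁻¹' S) ↪o ↥(OrderDual.ofDual ⁻¹' T)) := by
    intro S T
    constructor
    · rintro ⟨f⟩
      exact ⟨⟨⟨fun x => ⟨OrderDual.toDual (f ⟨OrderDual.ofDual x.1, x.2⟩).1, (f ⟨OrderDual.ofDual x.1, x.2⟩).2⟩,
        fun x y hxy => by
          have := congrArg Subtype.val hxy
          have := f.injective (Subtype.ext (OrderDual.toDual.injective this))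
          exact Subtype.ext (congrArg Subtype.val this)⟩,
        fun {x y} => f.le_iff_le (a := ⟨OrderDual.ofDual y.1, y.2⟩) (b := ⟨OrderDual.ofDual x.1, x.2⟩)⟩⟩
    · rintro ⟨f⟩
      exact ⟨⟨⟨fun x => ⟨OrderDual.ofDual (f ⟨OrderDual.toDual x.1, x.2⟩).1, (f ⟨OrderDual.toDual x.1, x.2⟩).2⟩,
        fun x y hxy => by
          have := congrArg Subtype.val hxy
          have := f.injective (Subtype.ext (OrderDual.ofDual.injective this))
          exact Subtype.ext (congrArg Subtype.val this)⟩,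
        fun {x y} => f.le_iff_le (a := ⟨OrderDual.toDual y.1, y.2⟩) (b := ⟨OrderDual.toDual x.1, x.2⟩)⟩⟩
  refine ⟨fun S => OrderDual.ofDual ⁻¹' (g (OrderDual.toDual ⁻¹' S)), fun S T => ?_, fun S => ?_⟩
  · exact (key (OrderDual.toDual ⁻¹' S) (OrderDual.toDual ⁻¹' T)).symm.trans (h1 _ _)
  · exact ⟨(key (OrderDual.toDual ⁻¹' S) _).1 (h2 _).1, (key _ (OrderDual.toDual ⁻¹' S)).1 (h2 _).2⟩

theorem subrep_of {α : Type*} [PartialOrder α] (g : Set α → Set α)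
    (h1 : ∀ S T : Set α, Nonempty (↥S ↪o ↥T) → g S ⊆ g T)
    (h2 : ∀ S : Set α, Nonempty (↥S ↪o ↥(g S)) ∧ Nonempty (↥(g S) ↪o ↥S)) : SubRepresentable α := by
  refine ⟨g, fun S T => ⟨h1 S T, fun h => ?_⟩, h2⟩
  obtain ⟨a⟩ := (h2 S).1
  obtain ⟨b⟩ := (h2 T).2
  exact ⟨a.trans ((Set.embeddingOfSubsetOrder h).trans b)⟩

theorem subrep_V {α : Type*} [PartialOrder α] [Finite α] (hs : SubRepresentable α)
    (a b c : α) (hab : a < b) (hac : a < c) (hbc : ¬ b ≤ c) (hcb : ¬ c ≤ b) : IsFlower α := by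
  obtain ⟨g, h1, h2⟩ := hs
  have iso : ∀ S : Set α, ∃ e : ↥S ↪o ↥(g S), Function.Surjective e := by
    intro S
    obtain ⟨⟨e⟩, ⟨f⟩⟩ := h2 S
    refine ⟨e, ?_⟩
    have hc : Nat.card S = Nat.card (g S) := le_antisymm
      (Nat.card_le_card_of_injective e e.injective) (Nat.card_le_card_of_injective f f.injective)
    exact ((Nat.bijective_iff_injective_and_card e).2 ⟨e.injective, hc⟩).2
  have mono : ∀ S T : Set α, S ⊆ T → g S ⊆ g T := fun S T h =>
    (h1 S T).1 ⟨Set.embeddingOfSubsetOrder h⟩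
  -- function form
  have isof : ∀ S : Set α, ∃ e : α → α, (∀ x ∈ S, e x ∈ g S) ∧
      (∀ x ∈ S, ∀ y ∈ S, (e x ≤ e y ↔ x ≤ y)) ∧ ∀ z ∈ g S, ∃ x ∈ S, e x = z := by
    classical
    intro S
    obtain ⟨e, he⟩ := iso S
    refine ⟨fun x => if h : x ∈ S then (e ⟨x, h⟩).1 else x, ?_, ?_, ?_⟩
    · intro x hx; simp [hx]
    · intro x hx y hy; simp [hx, hy]
    · intro z hz
      obtain ⟨x, hx⟩ := he ⟨z, hz⟩
      exact ⟨x.1, x.2, by simp [hx]⟩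
  have pair_lt : ∀ x y x' y' : α, x < y → x' < y' → g {x, y} ⊆ g {x', y'} := by
    classical
    intro x y x' y' h h'
    apply (h1 _ _).1
    refine ⟨OrderEmbedding.ofMapLEIff (fun z => if z.1 = x then ⟨x', by simp⟩ else ⟨y', by simp⟩) ?_⟩
    rintro ⟨u, rfl | rfl⟩ ⟨v, rfl | rfl⟩ <;>
      simp [h.ne', h'.le, h'.not_ge] <;> first | exact h.le | exact h.not_ge
  have pair_inc : ∀ x y x' y' : α, ¬ x ≤ y → ¬ y ≤ x → ¬ x' ≤ y' → ¬ y' ≤ x' →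
      g {x, y} ⊆ g {x', y'} := by
    classical
    intro x y x' y' h k h' k'
    have hne : y ≠ x := by rintro rfl; exact h le_rfl
    apply (h1 _ _).1
    refine ⟨OrderEmbedding.ofMapLEIff (fun z => if z.1 = x then ⟨x', by simp⟩ else ⟨y', by simp⟩) ?_⟩
    rintro ⟨u, rfl | rfl⟩ ⟨v, rfl | rfl⟩ <;>
      simp [hne, h', k'] <;> first | exact h | exact k
  have single : ∀ x y : α, g {x} ⊆ g {y} := by
    intro x y
    apply (h1 _ _).1
    refine ⟨OrderEmbedding.ofMapLEIff (fun z => ⟨y, rfl⟩) ?_⟩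
    rintro ⟨u, rfl⟩ ⟨v, rfl⟩; simp
  obtain ⟨p, hp⟩ : ∃ p, ∀ x, p ∈ g {x} := by
    obtain ⟨e, he, -⟩ := isof {a}
    exact ⟨e a, fun x => single a x (he a rfl)⟩
  obtain ⟨q, r, hqp, hqr, hpr, hrp, hlt, hinc⟩ : ∃ q r : α, q < p ∧ q < r ∧ ¬ p ≤ r ∧ ¬ r ≤ p ∧
      (∀ x y, x < y → q ∈ g {x, y}) ∧ (∀ x y, ¬ x ≤ y → ¬ y ≤ x → r ∈ g {x, y}) := by
    obtain ⟨e, he1, he2, he3⟩ := isof {a, b, c}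
    obtain ⟨e', hf1, hf2, hf3⟩ := isof {a, b}
    obtain ⟨e'', hk1, hk2, hk3⟩ := isof {b, c}
    have hsub1 : g {a, b} ⊆ g {a, b, c} := mono _ _ (by intro; simp; tauto)
    have hsub2 : g {b, c} ⊆ g {a, b, c} := mono _ _ (by intro; simp; tauto)
    have hp1 : p ∈ g {a, b} := mono {a} _ (by simp) (hp a)
    have hp2 : p ∈ g {b, c} := mono {b} _ (by simp) (hp b)
    simp only [Set.mem_insert_iff, Set.mem_singleton_iff, forall_eq_or_imp, forall_eq, exists_eq_or_imp,
      exists_eq_left] at *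
    have hal := hab.not_ge
    have hcl := hac.not_ge
    have e1 := he3 _ (hsub1 hf1.1)
    have e2 := he3 _ (hsub1 hf1.2)
    have e3 := he3 _ (hsub2 hk1.1)
    have e4 := he3 _ (hsub2 hk1.2)
    have p1 := hf3 _ hp1
    have p2 := hk3 _ hp2
    have hab' := hab.le
    have hac' := hac.le
    obtain ⟨⟨-,ab,ac⟩,⟨ba,-,bc⟩,ca,cb,-⟩ := he2
    obtain ⟨⟨-,ab'⟩,ba',-⟩ := hf2
    obtain ⟨⟨-,bc'⟩,cb',-⟩ := hk2
    have Ha : e a = e' a := by grind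
    have Hp : p = e' b := by grind
    have Hr : ∃ r, r ∈ g {b, c} ∧ (r = e b ∨ r = e c) ∧ r ≠ p := by grind
    obtain ⟨r, hr1, hr2, hr3⟩ := Hr
    refine ⟨e a, r, ?_, ?_, ?_, ?_, ?_, ?_⟩
    · rw [lt_iff_le_not_ge]; grind
    · rw [lt_iff_le_not_ge]; grind
    · grind
    · grind
    · intro x y hxy
      exact pair_lt _ _ _ _ hab hxy (Ha ▸ hf1.1)
    · intro x y hxy hyx
      exact pair_inc _ _ _ _ hbc hcb hxy hyx hr1
  have star : ∀ x y z : α, x < y → (¬ x ≤ z ∧ ¬ z ≤ x ∨ ¬ y ≤ z ∧ ¬ z ≤ y) → x < z := by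
    intro x y z hxy hz
    obtain ⟨e, he1, he2, he3⟩ := isof {x, y, z}
    have hq : q ∈ g {x, y, z} := mono {x, y} _ (by intro; simp; tauto) (hlt x y hxy)
    have hp' : p ∈ g {x, y, z} := mono {x} _ (by simp) (hp x)
    have hr : r ∈ g {x, y, z} := by
      rcases hz with hz | hz
      · exact mono {x, z} _ (by intro; simp; tauto) (hinc _ _ hz.1 hz.2)
      · exact mono {y, z} _ (by intro; simp; tauto) (hinc _ _ hz.1 hz.2)
    have q1 := he3 _ hq
    have p1 := he3 _ hp'
    have r1 := he3 _ hr
    simp only [Set.mem_insert_iff, Set.mem_singleton_iff, forall_eq_or_imp, forall_eq, exists_eq_or_imp,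
      exists_eq_left] at he2 q1 p1 r1
    obtain ⟨⟨-,xy,xz⟩,⟨yx,-,yz⟩,zx,zy,-⟩ := he2
    have := hxy.le
    have := hxy.not_ge
    rw [lt_iff_le_not_ge] at hqp hqr ⊢
    grind
  obtain ⟨x, hx⟩ := (Set.toFinite {x : α | ∃ y, x < y}).exists_maximal ⟨a, b, hab⟩
  obtain ⟨⟨y, hxy⟩, hmax⟩ := hx
  have hmax' : ∀ u v, x < u → ¬ u < v := fun u v hu huv =>
    (hmax ⟨v, huv⟩ hu.le).not_gt hu
  have hcmp : ∀ z, z < x ∨ z = x ∨ x < z := by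
    intro z
    by_cases h1 : x ≤ z
    · rcases h1.eq_or_lt with h | h <;> simp [h]
    · by_cases h2 : z ≤ x
      · left; exact lt_of_le_not_ge h2 h1
      · exact Or.inr (Or.inr (star x y z hxy (Or.inl ⟨h1, h2⟩)))
  refine ⟨x, ?_, ?_, ?_, hcmp⟩
  · intro u hu v hv _
    by_contra hcon
    push Not at hcon
    exact hcon.1 (star u x v hu (Or.inl hcon)).le
  · intro u hu v hv hne hle
    exact hmax' u v hu (lt_of_le_of_ne hle hne)
  · refine ⟨b, ?_, c, ?_, ?_⟩
    · rcases hcmp b with h | h | h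
      · exfalso
        rcases hcmp c with h' | h' | h'
        · have := star b x c h (Or.inl ⟨hbc, hcb⟩); exact hbc this.le
        · exact hbc (h' ▸ h.le)
        · exact hbc (h.trans h').le
      · exfalso
        rcases hcmp c with h' | h' | h'
        · exact hcb (h ▸ h'.le)
        · exact hbc (by rw [h, h'])
        · exact hbc (h ▸ h'.le)
      · exact h
    · rcases hcmp c with h | h | h
      · exfalso
        rcases hcmp b with h' | h' | h'
        · have := star b x c h' (Or.inl ⟨hbc, hcb⟩); exact hbc this.le
        · exact hcb (h' ▸ h.le)
        · exact hcb (h.trans h').le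
      · exfalso
        rcases hcmp b with h' | h' | h'
        · exact hbc (h ▸ h'.le)
        · exact hbc (by rw [h, h'])
        · exact hcb (h ▸ h'.le)
      · exact h
    · rintro rfl; exact hbc le_rfl

theorem chain_embed {γ δ : Type*} [PartialOrder γ] [PartialOrder δ] [Finite γ] [Finite δ]
    (h1 : ∀ x y : γ, x ≤ y ∨ y ≤ x) (h2 : ∀ x y : δ, x ≤ y ∨ y ≤ x)
    (hc : Nat.card γ ≤ Nat.card δ) : Nonempty (γ ↪o δ) := by
  classical
  let := Fintype.ofFinite γ
  let := Fintype.ofFinite δ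
  let : LinearOrder γ := { ‹PartialOrder γ› with
    le_total := h1, toDecidableLE := Classical.decRel _ }
  let : LinearOrder δ := { ‹PartialOrder δ› with
    le_total := h2, toDecidableLE := Classical.decRel _ }
  rw [Nat.card_eq_fintype_card, Nat.card_eq_fintype_card] at hc
  exact ⟨(Fintype.orderIsoFinOfCardEq γ rfl).symm.toOrderEmbedding.trans
    ((Fin.castLEOrderEmb hc).trans (Fintype.orderIsoFinOfCardEq δ rfl).toOrderEmbedding)⟩

theorem nested {α : Type*} [Finite α] (A : Set α) : ∃ F : ℕ → Set α, Monotone F ∧ (∀ k, F k ⊆ A) ∧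
    ∀ k ≤ A.ncard, (F k).ncard = k := by
  have e : ↥A ≃ Fin (A.ncard) := Finite.equivFinOfCardEq rfl
  refine ⟨fun k => {a | ∃ h : a ∈ A, (e ⟨a, h⟩ : ℕ) < k}, ?_, ?_, ?_⟩
  · rintro k l hkl a ⟨h, h'⟩; exact ⟨h, h'.trans_le hkl⟩
  · rintro k a ⟨h, _⟩; exact h
  · intro k hk
    have : {a | ∃ h : a ∈ A, (e ⟨a, h⟩ : ℕ) < k} =
        Set.range (fun i : Fin k => (e.symm (Fin.castLE hk i)).1) := by
      ext a
      constructor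
      · rintro ⟨h, h'⟩
        exact ⟨⟨e ⟨a, h⟩, h'⟩, by simp [Fin.castLE]⟩
      · rintro ⟨i, rfl⟩
        exact ⟨Subtype.coe_prop _, by simp⟩
    show Set.ncard {a | ∃ h : a ∈ A, (e ⟨a, h⟩ : ℕ) < k} = k
    rw [this, ← Set.image_univ, Set.ncard_image_of_injective, Set.ncard_univ, Nat.card_fin]
    intro i j hij
    exact Fin.castLE_injective hk (e.symm.injective (Subtype.ext hij))

theorem flower_subrep {α : Type*} [PartialOrder α] [Finite α] (h : IsFlower α) :
    SubRepresentable α := by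
  classical
  obtain ⟨x, hD, hU, hnt, hall⟩ := h
  set A : Set α := {y | y ≤ x} with hA
  set U : Set α := {y | x < y} with hUd
  have hAtot : ∀ a ∈ A, ∀ b ∈ A, a ≤ b ∨ b ≤ a := by
    intro a ha b hb
    rcases (show a ≤ x from ha).eq_or_lt with h | h
    · right; rw [h]; exact hb
    rcases (show b ≤ x from hb).eq_or_lt with h' | h'
    · left; rw [h']; exact ha
    · by_cases hab : a = b
      · left; exact hab.le
      · exact hD h h' hab
  have hAU : ∀ a ∈ A, ∀ u ∈ U, a < u := fun a ha u hu => lt_of_le_of_lt ha hu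
  have hcases : ∀ a, a ∈ A ∨ a ∈ U := by
    intro a
    rcases hall a with h | h | h
    · exact Or.inl h.le
    · exact Or.inl h.le
    · exact Or.inr h
  have hdisj : ∀ a ∈ A, a ∉ U := fun a ha hu => (hAU a ha a hu).false
  have hUinc : ∀ u ∈ U, ∀ v ∈ U, u ≤ v → u = v := fun u hu v hv huv => by
    by_contra hne; exact hU hu hv hne huv
  -- inclusion-type embedding
  have emb1 : ∀ S T : Set α, (S ∩ A).ncard ≤ (T ∩ A).ncard → (S ∩ U).ncard ≤ (T ∩ U).ncard →
      Nonempty (↥S ↪o ↥T) := by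
    intro S T h1 h2
    obtain ⟨f⟩ := chain_embed (γ := ↥(S ∩ A)) (δ := ↥(T ∩ A))
      (fun a b => hAtot a.1 a.2.2 b.1 b.2.2) (fun a b => hAtot a.1 a.2.2 b.1 b.2.2) h1
    obtain ⟨k⟩ : Nonempty (↥(S ∩ U) ↪ ↥(T ∩ U)) := by
      let := Fintype.ofFinite ↥(S ∩ U)
      let := Fintype.ofFinite ↥(T ∩ U)
      apply Function.Embedding.nonempty_of_card_le
      rw [← Nat.card_eq_fintype_card, ← Nat.card_eq_fintype_card]; exact h2
    refine ⟨OrderEmbedding.ofMapLEIff (fun s => if h : s.1 ∈ A then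
      ⟨(f ⟨s.1, s.2, h⟩).1, (f ⟨s.1, s.2, h⟩).2.1⟩ else
      ⟨(k ⟨s.1, s.2, (hcases s.1).resolve_left h⟩).1, (k ⟨s.1, s.2, (hcases s.1).resolve_left h⟩).2.1⟩) ?_⟩
    rintro ⟨s, hs⟩ ⟨t, ht⟩
    by_cases hsA : s ∈ A <;> by_cases htA : t ∈ A
    · simp only [hsA, htA, dite_true, Subtype.mk_le_mk]
      exact f.le_iff_le
    · have htU := (hcases t).resolve_left htA
      simp only [hsA, htA, dite_true, dite_false, Subtype.mk_le_mk]
      exact iff_of_true (hAU _ (f _).2.2 _ (k _).2.2).le (hAU _ hsA _ htU).le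
    · have hsU := (hcases s).resolve_left hsA
      simp only [hsA, htA, dite_true, dite_false, Subtype.mk_le_mk]
      exact iff_of_false (hAU _ (f _).2.2 _ (k _).2.2).not_ge (hAU _ htA _ hsU).not_ge
    · have hsU := (hcases s).resolve_left hsA
      have htU := (hcases t).resolve_left htA
      simp only [hsA, htA, dite_false, Subtype.mk_le_mk]
      constructor
      · intro hle
        have := hUinc _ (k _).2.2 _ (k _).2.2 hle
        have := congrArg Subtype.val (k.injective (Subtype.ext this))
        exact le_of_eq this
      · intro hle
        have := hUinc _ hsU _ htU hle
        subst this
        exact le_rfl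
  have hUpos : 1 ≤ U.ncard := (Set.ncard_pos).2 hnt.nonempty
  obtain ⟨FA, FAm, FAs, FAc⟩ := nested A
  obtain ⟨FU, FUm, FUs, FUc⟩ := nested U
  have RA : ∀ k j, (FA k ∪ FU j) ∩ A = FA k := by
    intro k j; ext a; constructor
    · rintro ⟨h | h, ha⟩
      · exact h
      · exact absurd (FUs j h) (hdisj a ha)
    · intro h; exact ⟨Or.inl h, FAs k h⟩
  have RU : ∀ k j, (FA k ∪ FU j) ∩ U = FU j := by
    intro k j; ext a; constructor
    · rintro ⟨h | h, ha⟩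
      · exact absurd ha (hdisj a (FAs k h))
      · exact h
    · intro h; exact ⟨Or.inr h, FUs j h⟩
  -- chains
  have emb2 : ∀ S T : Set α, (S ∩ U).ncard ≤ 1 → (T ∩ U).ncard ≤ 1 → S.ncard ≤ T.ncard →
      Nonempty (↥S ↪o ↥T) := by
    have tot : ∀ S : Set α, (S ∩ U).ncard ≤ 1 → ∀ a b : ↥S, a ≤ b ∨ b ≤ a := by
      rintro S hS ⟨a, ha⟩ ⟨b, hb⟩
      rw [Set.ncard_le_one_iff] at hS
      simp only [Subtype.mk_le_mk]
      rcases hcases a with h | h <;> rcases hcases b with h' | h'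
      · exact hAtot _ h _ h'
      · exact Or.inl (hAU _ h _ h').le
      · exact Or.inr (hAU _ h' _ h).le
      · exact Or.inl (hS ⟨ha, h⟩ ⟨hb, h'⟩).le
    intro S T hS hT hc
    exact chain_embed (tot S hS) (tot T hT) hc
  have hsplit : ∀ S : Set α, S.ncard = (S ∩ A).ncard + (S ∩ U).ncard := by
    intro S
    rw [← Set.ncard_union_eq]
    · congr 1
      ext a
      have := hcases a
      simp only [Set.mem_union, Set.mem_inter_iff]; tauto
    · rw [Set.disjoint_left]; rintro a ⟨_, ha⟩ ⟨_, hu⟩; exact hdisj a ha hu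
  have norm : ∀ S : Set α, ∃ k j, k ≤ A.ncard ∧ j ≤ U.ncard ∧ (j = 0 → k = 0) ∧
      Nonempty (↥S ↪o ↥(FA k ∪ FU j)) ∧ Nonempty (↥(FA k ∪ FU j) ↪o ↥S) := by
    intro S
    have hSA : (S ∩ A).ncard ≤ A.ncard := Set.ncard_le_ncard Set.inter_subset_right
    have hSU : (S ∩ U).ncard ≤ U.ncard := Set.ncard_le_ncard Set.inter_subset_right
    by_cases hc : (S ∩ U).ncard = 0 ∧ (S ∩ A).ncard ≠ 0
    · refine ⟨(S ∩ A).ncard - 1, 1, by omega, hUpos, by omega, ?_⟩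
      have hA1 := FAc ((S ∩ A).ncard - 1) (by omega)
      have hU1 := FUc 1 hUpos
      have hs1 := hsplit S
      have hs2 := hsplit (FA ((S ∩ A).ncard - 1) ∪ FU 1)
      rw [RA, RU, hA1, hU1] at hs2
      constructor
      · apply emb2 _ _ (by omega) (by rw [RU]; omega) (by omega)
      · apply emb2 _ _ (by rw [RU]; omega) (by omega) (by omega)
    · refine ⟨(S ∩ A).ncard, (S ∩ U).ncard, hSA, hSU, by tauto, ?_⟩
      constructor
      · apply emb1
        · rw [RA, FAc _ hSA]
        · rw [RU, FUc _ hSU]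
      · apply emb1
        · rw [RA, FAc _ hSA]
        · rw [RU, FUc _ hSU]
  choose k j hk hj hkj hR1 hR2 using norm
  apply subrep_of (fun S => FA (k S) ∪ FU (j S)) _ (fun S => ⟨hR1 S, hR2 S⟩)
  rintro S T ⟨f0⟩
  obtain ⟨f1⟩ := hR2 S
  obtain ⟨f2⟩ := hR1 T
  have f : ↥(FA (k S) ∪ FU (j S)) ↪o ↥(FA (k T) ∪ FU (j T)) := f1.trans (f0.trans f2)
  rcases Nat.eq_zero_or_pos (j S) with h0 | hpos
  · exact Set.union_subset_union (FAm (by simp [hkj S h0])) (FUm (by simp [h0]))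
  obtain ⟨u, hu⟩ : (FU (j S)).Nonempty := by
    rw [← Set.ncard_pos, FUc _ (hj S)]; exact hpos
  have hkk : k S ≤ k T := by
    rw [← FAc _ (hk S), ← FAc _ (hk T)]
    have hm : ∀ a : ↥(FA (k S)), (f ⟨a.1, Or.inl a.2⟩).1 ∈ FA (k T) := by
      intro a
      have hlt : f ⟨a.1, Or.inl a.2⟩ < f ⟨u, Or.inr hu⟩ :=
        f.lt_iff_lt.2 (hAU _ (FAs _ a.2) _ (FUs _ hu))
      have hlt' : (f ⟨a.1, Or.inl a.2⟩).1 < (f ⟨u, Or.inr hu⟩).1 := hlt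
      rcases (f ⟨a.1, Or.inl a.2⟩).2 with h | h
      · exact h
      · exfalso
        have h' := FUs _ h
        exact hlt'.ne (hUinc _ h' _ (lt_trans h' hlt') hlt'.le)
    exact Nat.card_le_card_of_injective
      (fun a : ↥(FA (k S)) => (⟨_, hm a⟩ : ↥(FA (k T)))) (fun a b hab => by
        have := congrArg Subtype.val hab
        have := f.injective (Subtype.ext this)
        exact Subtype.ext (congrArg (fun z => z.1) this))
  have hjj : j S ≤ j T := by
    rcases Nat.lt_or_ge 1 (j S) with h2 | h2
    · rw [← FUc _ (hj S), ← FUc _ (hj T)]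
      have hm : ∀ a : ↥(FU (j S)), (f ⟨a.1, Or.inr a.2⟩).1 ∈ FU (j T) := by
        intro a
        obtain ⟨b, hb, hne⟩ := Set.exists_ne_of_one_lt_ncard (by rw [FUc _ (hj S)]; exact h2) a.1
        have n1 : ¬ (f ⟨a.1, Or.inr a.2⟩).1 ≤ (f ⟨b, Or.inr hb⟩).1 := fun h =>
          hne (hUinc _ (FUs _ a.2) _ (FUs _ hb) (f.le_iff_le.1 h)).symm
        have n2 : ¬ (f ⟨b, Or.inr hb⟩).1 ≤ (f ⟨a.1, Or.inr a.2⟩).1 := fun h =>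
          hne (hUinc _ (FUs _ hb) _ (FUs _ a.2) (f.le_iff_le.1 h))
        rcases (f ⟨a.1, Or.inr a.2⟩).2 with h | h
        · exfalso
          rcases hcases (f ⟨b, Or.inr hb⟩).1 with h' | h'
          · rcases hAtot _ (FAs _ h) _ h' with h | h
            · exact n1 h
            · exact n2 h
          · exact n1 (hAU _ (FAs _ h) _ h').le
        · exact h
      exact Nat.card_le_card_of_injective
        (fun a : ↥(FU (j S)) => (⟨_, hm a⟩ : ↥(FU (j T)))) (fun a b hab => by
          have := congrArg Subtype.val hab
          have := f.injective (Subtype.ext this)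
          exact Subtype.ext (congrArg (fun z => z.1) this))
    · rcases Nat.eq_zero_or_pos (j T) with h0 | hpos'
      · exfalso
        have e1 : FA (k T) = ∅ := by
          rw [hkj T h0, ← Set.ncard_eq_zero]; exact FAc 0 (Nat.zero_le _)
        have e2 : FU (j T) = ∅ := by
          rw [h0, ← Set.ncard_eq_zero]; exact FUc 0 (Nat.zero_le _)
        have := (f ⟨u, Or.inr hu⟩).2
        rcases this with h | h
        · exact e1.subset h
        · exact e2.subset h
      · omega
  exact Set.union_subset_union (FAm hkk) (FUm hjj)

theorem duc_repr {γ : Type*} [PartialOrder γ] [Finite γ] (h : IsDisjointUnionOfChains γ) :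
    ∃ φ : γ → ℕ × ℕ, IsLowerSet (Set.range φ) ∧
      ∀ x y, x ≤ y ↔ (φ x).1 = (φ y).1 ∧ (φ x).2 ≤ (φ y).2 := by
  classical
  let := Fintype.ofFinite γ
  let s : Setoid γ := ⟨fun a b => a ≤ b ∨ b ≤ a, fun _ => Or.inl le_rfl, fun h => h.symm,
    fun {a b c} hab hbc => h a c b hab hbc.symm⟩
  let size : Quotient s → ℕ := fun q => (Finset.univ.filter (fun y : γ => (⟦y⟧ : Quotient s) = q)).card
  let e0 : Quotient s ≃ Fin (Fintype.card (Quotient s)) := Fintype.equivFin _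
  let F : Fin (Fintype.card (Quotient s)) → ℕᵒᵈ := fun i => OrderDual.toDual (size (e0.symm i))
  have hmono := Tuple.monotone_sort F
  let idx : Quotient s → Fin (Fintype.card (Quotient s)) := fun q => (Tuple.sort F).symm (e0 q)
  have idx_inj : Function.Injective idx := fun a b hab => e0.injective ((Tuple.sort F).symm.injective hab)
  have idx_surj : Function.Surjective idx := fun i => ⟨e0.symm (Tuple.sort F i), by simp [idx]⟩
  have hsize : ∀ p q, idx p ≤ idx q → size q ≤ size p := by
    intro p q hpq
    have := hmono hpq
    simpa [F, idx] using this
  let ht : γ → ℕ := fun x => (Finset.univ.filter (fun y => y < x)).card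
  have ht_lt : ∀ x y, x < y → ht x < ht y := by
    intro x y hxy
    apply Finset.card_lt_card
    rw [Finset.ssubset_iff_of_subset]
    · exact ⟨x, by simp [hxy]⟩
    · intro z; simp only [Finset.mem_filter, Finset.mem_univ, true_and]; exact fun hz => hz.trans hxy
  have rel : ∀ x y : γ, (⟦x⟧ : Quotient s) = ⟦y⟧ ↔ (x ≤ y ∨ y ≤ x) := fun x y => Quotient.eq (r := s)
  have hle : ∀ x y : γ, x ≤ y ↔ (⟦x⟧ : Quotient s) = ⟦y⟧ ∧ ht x ≤ ht y := by
    intro x y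
    constructor
    · intro hxy
      refine ⟨(rel _ _).2 (Or.inl hxy), ?_⟩
      rcases hxy.eq_or_lt with h | h
      · rw [h]
      · exact (ht_lt _ _ h).le
    · rintro ⟨h1, h2⟩
      rcases (rel _ _).1 h1 with h | h
      · exact h
      · rcases h.eq_or_lt with h | h
        · exact h.ge
        · exact absurd h2 (ht_lt _ _ h).not_ge
  have hts : ∀ x : γ, ht x < size ⟦x⟧ := by
    intro x
    apply Finset.card_lt_card
    rw [Finset.ssubset_iff_of_subset]
    · exact ⟨x, by simp⟩
    · intro z; simp only [Finset.mem_filter, Finset.mem_univ, true_and]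
      exact fun hz => (rel _ _).2 (Or.inl hz.le)
  have hsurj : ∀ q : Quotient s, ∀ n < size q, ∃ x : γ, ⟦x⟧ = q ∧ ht x = n := by
    intro q n hn
    have := Finset.surjOn_of_injOn_of_card_le (s := Finset.univ.filter (fun y : γ => (⟦y⟧ : Quotient s) = q))
      (t := Finset.range (size q)) ht ?_ ?_ ?_
    · obtain ⟨x, hx, hxn⟩ := this (by simpa using hn)
      exact ⟨x, by simpa using hx, hxn⟩
    · intro x hx
      have hx : (⟦x⟧ : Quotient s) = q := by simpa using hx
      have := hts x
      rw [hx] at this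
      simpa using this
    · intro x hx y hy hxy
      have hx : (⟦x⟧ : Quotient s) = q := by simpa using hx
      have hy : (⟦y⟧ : Quotient s) = q := by simpa using hy
      exact le_antisymm ((hle _ _).2 ⟨hx.trans hy.symm, hxy.le⟩)
        ((hle _ _).2 ⟨hy.trans hx.symm, hxy.ge⟩)
    · simp [size]
  refine ⟨fun x => (idx ⟦x⟧, ht x), ?_, ?_⟩
  · rintro _ ⟨i, n⟩ hle' ⟨x, rfl⟩
    obtain ⟨hi, hn⟩ := hle'
    simp only at hi hn
    obtain ⟨q, hq⟩ := idx_surj ⟨i, hi.trans_lt (idx ⟦x⟧).2⟩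
    have h1 : size ⟦x⟧ ≤ size q := hsize _ _ (by rw [hq]; exact hi)
    obtain ⟨y, hy, hyn⟩ := hsurj q n (hn.trans_lt ((hts x).trans_le h1))
    exact ⟨y, by simp [hy, hq, hyn]⟩
  · intro x y
    rw [hle]
    simp only [Fin.val_inj, idx_inj.eq_iff]

theorem duc_mono {γ δ : Type*} [PartialOrder γ] [PartialOrder δ] (φ : γ → ℕ × ℕ) (ψ : δ → ℕ × ℕ)
    (h1 : IsLowerSet (Set.range φ)) (h2 : IsLowerSet (Set.range ψ))
    (hφ : ∀ x y, x ≤ y ↔ (φ x).1 = (φ y).1 ∧ (φ x).2 ≤ (φ y).2)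
    (hψ : ∀ x y, x ≤ y ↔ (ψ x).1 = (ψ y).1 ∧ (ψ x).2 ≤ (ψ y).2)
    (f : γ ↪o δ) : Set.range φ ⊆ Set.range ψ := by
  rintro ⟨i, n⟩ hin
  -- heights do not decrease
  have hht : ∀ n x, (φ x).2 = n → n ≤ (ψ (f x)).2 := by
    intro n
    induction n with
    | zero => intro x _; exact Nat.zero_le _
    | succ n ih =>
      intro x hx
      obtain ⟨y, hy⟩ : ((φ x).1, n) ∈ Set.range φ :=
        h1 (a := φ x) ⟨le_rfl, by simp [hx]⟩ ⟨x, rfl⟩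
      have hyx : y < x := by
        rw [lt_iff_le_not_ge, hφ, hφ, hy, hx]; simp
      have := ih y (by rw [hy])
      have h3 := f.lt_iff_lt.2 hyx
      rw [lt_iff_le_not_ge, hψ, hψ] at h3
      have : ¬ (ψ (f x)).2 ≤ (ψ (f y)).2 := fun hh => h3.2 ⟨h3.1.1.symm, hh⟩
      omega
  have hrow : ∀ k : Fin (i + 1), ∃ x, φ x = (k.1, n) := fun k =>
    h1 (a := (i, n)) ⟨Nat.lt_succ_iff.1 k.2, le_rfl⟩ hin
  choose x hx using hrow
  have hinj : Function.Injective (fun k => (ψ (f (x k))).1) := by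
    intro k l hkl
    have : x k ≤ x l ∨ x l ≤ x k := by
      rw [← f.le_iff_le, ← f.le_iff_le (a := x l), hψ, hψ]
      have hkl : (ψ (f (x k))).1 = (ψ (f (x l))).1 := hkl
      rcases le_total (ψ (f (x k))).2 (ψ (f (x l))).2 with h | h
      · exact Or.inl ⟨hkl, h⟩
      · exact Or.inr ⟨hkl.symm, h⟩
    rw [hφ, hφ, hx, hx] at this
    apply Fin.ext
    rcases this with h | h
    · exact h.1
    · exact h.1.symm
  obtain ⟨k, hk⟩ : ∃ k, i ≤ (ψ (f (x k))).1 := by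
    by_contra hcon
    push Not at hcon
    have := Fintype.card_le_of_injective (fun k => (⟨_, hcon k⟩ : Fin i))
      (fun a b hab => hinj (congrArg Fin.val hab))
    simp at this
  exact h2 (a := ψ (f (x k))) ⟨hk, hht n (x k) (by rw [hx])⟩ ⟨_, rfl⟩

theorem duc_embed {γ δ : Type*} [PartialOrder γ] [PartialOrder δ] (φ : γ → ℕ × ℕ) (ψ : δ → ℕ × ℕ)
    (hφ : ∀ x y, x ≤ y ↔ (φ x).1 = (φ y).1 ∧ (φ x).2 ≤ (φ y).2)
    (hψ : ∀ x y, x ≤ y ↔ (ψ x).1 = (ψ y).1 ∧ (ψ x).2 ≤ (ψ y).2)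
    (h : ∀ x, ∃ y, ψ y = φ x) : Nonempty (γ ↪o δ) := by
  choose f hf using h
  exact ⟨OrderEmbedding.ofMapLEIff f (fun a b => by rw [hψ, hφ, hf, hf])⟩

theorem duc_subrep {α : Type*} [PartialOrder α] [Finite α] (h : IsDisjointUnionOfChains α) :
    SubRepresentable α := by
  obtain ⟨Φ, hΦ1, hΦ2⟩ := duc_repr h
  have := fun S : Set α => duc_repr (γ := ↥S) (fun a b c => h a.1 b.1 c.1)
  choose φ hφ1 hφ2 using this
  apply subrep_of (fun S => Φ ⁻¹' (Set.range (φ S)))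
  · rintro S T ⟨f⟩
    exact Set.preimage_mono (duc_mono _ _ (hφ1 S) (hφ1 T) (hφ2 S) (hφ2 T) f)
  · intro S
    have hsub : Set.range (φ S) ⊆ Set.range Φ :=
      duc_mono _ _ (hφ1 S) hΦ1 (hφ2 S) hΦ2 (OrderEmbedding.subtype _)
    constructor
    · apply duc_embed (φ S) (fun y : ↥(Φ ⁻¹' (Set.range (φ S))) => Φ y.1) (hφ2 S)
        (fun a b => hΦ2 a.1 b.1)
      intro x
      obtain ⟨y, hy⟩ := hsub ⟨x, rfl⟩
      exact ⟨⟨y, x, hy.symm⟩, hy⟩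
    · apply duc_embed (fun y : ↥(Φ ⁻¹' (Set.range (φ S))) => Φ y.1) (φ S)
        (fun a b => hΦ2 a.1 b.1) (hφ2 S)
      exact fun x => x.2

theorem finite_subrep_iff (α : Type*) [PartialOrder α] [Finite α] :
    SubRepresentable α ↔ IsFlower α ∨ IsFlower αᵒᵈ ∨ IsDisjointUnionOfChains α := by
  constructor
  · intro hs
    by_contra hcon
    push Not at hcon
    obtain ⟨hn1, hn2, hn3⟩ := hcon
    apply hn3
    have V : ∀ a b c : α, a ≤ b → a ≤ c → b ≤ c ∨ c ≤ b := by
      intro a b c hab hac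
      by_contra hbc
      push Not at hbc
      refine hn1 (subrep_V hs a b c (hab.lt_of_ne ?_) (hac.lt_of_ne ?_) hbc.1 hbc.2)
      · rintro rfl; exact hbc.1 hac
      · rintro rfl; exact hbc.2 hab
    have L : ∀ a b c : α, b ≤ a → c ≤ a → b ≤ c ∨ c ≤ b := by
      intro a b c hab hac
      by_contra hbc
      push Not at hbc
      refine hn2 (subrep_V (SubRep_dual hs) (OrderDual.toDual a) (OrderDual.toDual b)
        (OrderDual.toDual c) (OrderDual.toDual_lt_toDual.2 (hab.lt_of_ne ?_))
        (OrderDual.toDual_lt_toDual.2 (hac.lt_of_ne ?_)) hbc.2 hbc.1)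
      · rintro rfl; exact hbc.2 hac
      · rintro rfl; exact hbc.1 hab
    rintro a b c (h | h) (h' | h')
    · exact L c a b h h'
    · exact Or.inl (h.trans h')
    · exact Or.inr (h'.trans h)
    · exact V c a b h h'
  · rintro (h | h | h)
    · exact flower_subrep h
    · exact SubRep_dual (flower_subrep h)
    · exact duc_subrep h
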